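/- For every A ∈ ℝ the coarse-grained defect-formation free energy G_N^cg(A) is well-defined (both one-dimensional integrals are finite and positive), and there exists a constant C > 0 such that |G_N^cg(A) − G_∞(A)| ≤ C/N for all integers N ≥ 2, where G_∞(A) = −log( (∫_ℝ exp(−(ψ+P)(y) + W'(A)·y) dy) / (∫_ℝ exp(−ψ(y) + W'(A)·y) dy) ). -/

import Mathlib

/-!
The upper bound on `ψ''` makes `κ y² / 2 - ψ y` convex, that is, `ψ` is strongly concave with the
negative modulus `-κ`. Shifting the variable of integration turns `log ∫ exp (-ψ y + σ y) dy` into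
`σ² / (2 κ)` plus the log-integral of exponentials convex in `σ`, so the log-partition function is
strongly convex with modulus `1 / κ`. Its Legendre transform `W` is therefore convex and inherits
the modulus `-κ` of `ψ`, whence `0 ≤ W (A + h) - W A - W' (A) h ≤ κ h²`.

By Jensen's inequality the minimal chain has equal increments, so that
`E_N (A, y) = (N - 1) (W (A + (A - y) / (N - 1)) - W A)` and
`0 ≤ E_N (A, y) - W' (A) (A - y) ≤ κ (A - y)² / (N - 1)`. Replacing `E_N` by its linearisation
changes each log-integral in `G_N` by at most the Gibbs mean of the difference (Jensen's inequality
again), a second moment divided by `N - 1`. The constant factor `exp (-W' (A) A)` cancels in the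
quotient, which leaves `G_∞`.
-/

noncomputable section

open MeasureTheory Real Filter

/-- The Cauchy–Born strain energy `W(A)`. -/
def W (ψ : ℝ → ℝ) (A : ℝ) : ℝ :=
  ⨆ σ : ℝ, (σ * A - Real.log (∫ y : ℝ, Real.exp (-ψ y + σ * y)))

/-- The finite-domain coarse-grained energy
`E_N^cg(A,y) = inf { ∑_{i=2}^N [Wf(u_i - u_{i-1}) - Wf(A)] : u₁ = y, u_N = N A }`. -/
def EcgN (Wf : ℝ → ℝ) (N : ℕ) (A y : ℝ) : ℝ :=
  sInf { E : ℝ | ∃ u : ℕ → ℝ, u 1 = y ∧ u N = N * A ∧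
    E = ∑ i ∈ Finset.Icc 2 N, (Wf (u i - u (i - 1)) - Wf A) }

/-- The coarse-grained defect-formation free energy `G_N^cg(A)`. -/
def GNcg (ψ P : ℝ → ℝ) (N : ℕ) (A : ℝ) : ℝ :=
  - Real.log
      ((∫ y : ℝ, Real.exp (-P y - ψ y - EcgN (W ψ) N A y)) /
       (∫ y : ℝ, Real.exp (-ψ y - EcgN (W ψ) N A y)))

open ProbabilityTheory
open scoped RealInnerProductSpace

/-! ### Log-integrals of exponentials -/

section LogIntegralExp

variable {α : Type*} [MeasurableSpace α] {μ : Measure α}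

/-- Hölder's inequality is avoided: the exponents are normalised so that both exponentials have
integral one, and then convexity of `exp` is applied pointwise. -/
lemma convexOn_log_integral_exp [NeZero μ] {E : Type*} [AddCommMonoid E] [Module ℝ E] {s : Set E}
    {F : E → α → ℝ} (hF : ∀ a, ConvexOn ℝ s fun x => F x a)
    (hint : ∀ x ∈ s, Integrable (fun a => exp (F x a)) μ) :
    ConvexOn ℝ s fun x => log (∫ a, exp (F x a) ∂μ) := by
  obtain ⟨a₀⟩ : Nonempty α := μ.nonempty_of_neZero
  refine ⟨(hF a₀).1, fun x hx y hy p q hp hq hpq => ?_⟩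
  have hz : p • x + q • y ∈ s := (hF a₀).1 hx hy hp hq hpq
  set Lx := log (∫ a, exp (F x a) ∂μ) with hLx
  set Ly := log (∫ a, exp (F y a) ∂μ) with hLy
  have integral_eq_exp_log {u : E} (hu : u ∈ s) :
      ∫ a, exp (F u a) ∂μ = exp (log (∫ a, exp (F u a) ∂μ)) :=
    (exp_log (integral_exp_pos (hint u hu))).symm
  have convexity (a : α) : exp (F (p • x + q • y) a) ≤
      exp (p * Lx + q * Ly) * (p * (exp (F x a) / exp Lx) + q * (exp (F y a) / exp Ly)) := by
    simp only [← exp_sub]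
    calc exp (F (p • x + q • y) a)
        ≤ exp ((p * Lx + q * Ly) + (p * (F x a - Lx) + q * (F y a - Ly))) := by
          have := (hF a).2 hx hy hp hq hpq
          simp only [smul_eq_mul] at this
          exact exp_le_exp.2 (by linarith)
      _ ≤ _ := by
          rw [exp_add]
          gcongr
          exact convexOn_exp.2 trivial trivial hp hq hpq
  have hx' := ((hint x hx).div_const (exp Lx)).const_mul p
  have hy' := ((hint y hy).div_const (exp Ly)).const_mul q
  have hle := integral_mono (hint _ hz) ((hx'.add hy').const_mul _) convexity
  simp only [Pi.add_apply] at hle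
  rw [integral_const_mul, integral_add hx' hy', integral_const_mul, integral_const_mul,
    integral_div, integral_div, integral_eq_exp_log hx, integral_eq_exp_log hy, ← hLx, ← hLy,
    div_self (exp_ne_zero _), div_self (exp_ne_zero _), mul_one, mul_one, hpq, mul_one] at hle
  exact (log_le_iff_le_exp (integral_exp_pos (hint _ hz))).2 hle

lemma integrable_exp_sub {f D : α → ℝ} (hf : Integrable (fun a => exp (f a)) μ)
    (hD : AEStronglyMeasurable D μ) (hD₀ : ∀ a, 0 ≤ D a) :
    Integrable (fun a => exp (f a - D a)) μ := by
  have hf' : AEMeasurable f μ := aemeasurable_of_aemeasurable_exp hf.1.aemeasurable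
  refine hf.mono' (by fun_prop) (ae_of_all _ fun a => ?_)
  rw [norm_of_nonneg (exp_pos _).le]
  exact exp_le_exp.2 (sub_le_self _ (hD₀ a))

lemma abs_log_integral_exp_neg_le [IsProbabilityMeasure μ] {D : α → ℝ} (hD : Integrable D μ)
    (hD₀ : ∀ a, 0 ≤ D a) : |log (∫ a, exp (-D a) ∂μ)| ≤ ∫ a, D a ∂μ := by
  have hexp : Integrable (fun a => exp (-D a)) μ := by
    simpa using integrable_exp_sub (f := 0) (by simp) hD.1 hD₀
  have jensen : exp (-∫ a, D a ∂μ) ≤ ∫ a, exp (-D a) ∂μ := by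
    rw [← integral_neg]
    exact convexOn_exp.map_integral_le continuous_exp.continuousOn isClosed_univ (by simp)
      hD.neg hexp
  have hle_one : ∫ a, exp (-D a) ∂μ ≤ 1 := by
    simpa using integral_mono hexp (integrable_const 1) fun a => exp_le_one_iff.2 (by simp [hD₀ a])
  rw [abs_of_nonpos (log_nonpos (integral_nonneg fun a => (exp_pos _).le) hle_one), neg_le,
    le_log_iff_exp_le (integral_exp_pos hexp)]
  exact jensen

lemma abs_log_integral_exp_sub_sub_le [NeZero μ] {f D : α → ℝ}
    (hf : Integrable (fun a => exp (f a)) μ) (hD : Integrable D (μ.tilted f))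
    (hD₀ : ∀ a, 0 ≤ D a) :
    |log (∫ a, exp (f a - D a) ∂μ) - log (∫ a, exp (f a) ∂μ)| ≤ ∫ a, D a ∂μ.tilted f := by
  have := isProbabilityMeasure_tilted hf
  have hfD : Integrable (fun a => exp (f a - D a)) μ :=
    integrable_exp_sub hf (hD.1.mono_ac (absolutelyContinuous_tilted hf)) hD₀
  have hratio : ∫ a, exp (-D a) ∂μ.tilted f = (∫ a, exp (f a - D a) ∂μ) / ∫ a, exp (f a) ∂μ :=
    integral_exp_tilted f fun a => -D a
  rw [← log_div (integral_exp_pos hfD).ne' (integral_exp_pos hf).ne', ← hratio]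
  exact abs_log_integral_exp_neg_le hD hD₀

end LogIntegralExp

/-! ### Defect-formation free energies -/

section DefectFreeEnergy

variable {α : Type*} [MeasurableSpace α] {μ : Measure α} {ψ P : α → ℝ}

/-- The free energy of adding the defect potential `P` to the potential `ψ` in an environment of
energy `L`. Both `G_N^cg(A)` and `G_∞(A)` are of this form: the former with the environment energy
`E_N^cg(A, ·)`, the latter with its linearisation `y ↦ W'(A) (A - y)`. -/
def defectFreeEnergy (μ : Measure α) (ψ P L : α → ℝ) : ℝ :=
  -log ((∫ a, exp (-P a - ψ a - L a) ∂μ) / ∫ a, exp (-ψ a - L a) ∂μ)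

lemma defectFreeEnergy_const_add (c : ℝ) (L : α → ℝ) :
    defectFreeEnergy μ ψ P (fun a => c + L a) = defectFreeEnergy μ ψ P L := by
  have hfactor (V : α → ℝ) :
      ∫ a, exp (V a - (c + L a)) ∂μ = exp (-c) * ∫ a, exp (V a - L a) ∂μ := by
    rw [← integral_const_mul]
    exact integral_congr_ae (ae_of_all _ fun a => by simp only [← exp_add]; ring_nf)
  rw [defectFreeEnergy, hfactor fun a => -P a - ψ a, hfactor fun a => -ψ a,
    mul_div_mul_left _ _ (exp_ne_zero _), defectFreeEnergy]

lemma abs_defectFreeEnergy_sub_le [NeZero μ] {L E : α → ℝ} (hLE : ∀ a, L a ≤ E a)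
    (hP : Integrable (fun a => exp (-P a - ψ a - L a)) μ)
    (hψ : Integrable (fun a => exp (-ψ a - L a)) μ)
    (hEP : Integrable (fun a => E a - L a) (μ.tilted fun a => -P a - ψ a - L a))
    (hEψ : Integrable (fun a => E a - L a) (μ.tilted fun a => -ψ a - L a)) :
    |defectFreeEnergy μ ψ P E - defectFreeEnergy μ ψ P L| ≤
      (∫ a, (E a - L a) ∂μ.tilted fun a => -P a - ψ a - L a) +
        ∫ a, (E a - L a) ∂μ.tilted fun a => -ψ a - L a := by
  have hD₀ (a : α) : 0 ≤ E a - L a := sub_nonneg.2 (hLE a)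
  have hboundP := abs_log_integral_exp_sub_sub_le hP hEP hD₀
  have hboundψ := abs_log_integral_exp_sub_sub_le hψ hEψ hD₀
  have hintP := integrable_exp_sub hP (hEP.1.mono_ac (absolutelyContinuous_tilted hP)) hD₀
  have hintψ := integrable_exp_sub hψ (hEψ.1.mono_ac (absolutelyContinuous_tilted hψ)) hD₀
  simp only [sub_sub_sub_cancel_right] at hboundP hboundψ hintP hintψ
  rw [defectFreeEnergy, defectFreeEnergy,
    log_div (integral_exp_pos hintP).ne' (integral_exp_pos hintψ).ne',
    log_div (integral_exp_pos hP).ne' (integral_exp_pos hψ).ne', abs_le]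
  rw [abs_le] at hboundP hboundψ
  constructor <;> linarith

end DefectFreeEnergy

/-! ### Strongly convex functions -/

section StrongConvexity

lemma strongConvexOn_univ_of_le_deriv2 {f : ℝ → ℝ} {m : ℝ} (hf : ContDiff ℝ 2 f)
    (hm : ∀ x, m ≤ deriv (deriv f) x) : StrongConvexOn Set.univ m f := by
  have hderiv (x : ℝ) : HasDerivAt (fun y => f y - m / 2 * y ^ 2) (deriv f x - m * x) x := by
    refine (((hf.differentiable two_ne_zero) x).hasDerivAt.fun_sub
      ((hasDerivAt_pow 2 x).const_mul (m / 2))).congr_deriv ?_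
    push_cast
    ring
  have hderiv2 (x : ℝ) : HasDerivAt (fun y => deriv f y - m * y) (deriv (deriv f) x - m) x := by
    simpa using (hf.differentiable_deriv_two x).hasDerivAt.fun_sub ((hasDerivAt_id x).const_mul m)
  have hderiv_eq : deriv (fun y => f y - m / 2 * y ^ 2) = fun y => deriv f y - m * y :=
    funext fun x => (hderiv x).deriv
  rw [strongConvexOn_iff_convex]
  simp only [norm_eq_abs, sq_abs]
  refine convexOn_univ_of_deriv2_nonneg (fun x => (hderiv x).differentiableAt) ?_ fun x => ?_
  · rw [hderiv_eq]
    exact fun x => (hderiv2 x).differentiableAt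
  · rw [Function.iterate_succ_apply, Function.iterate_one, hderiv_eq, (hderiv2 x).deriv]
    exact sub_nonneg.2 (hm x)

lemma strongConcaveOn_univ_of_deriv2_le {f : ℝ → ℝ} {m : ℝ} (hf : ContDiff ℝ 2 f)
    (hm : ∀ x, deriv (deriv f) x ≤ -m) : StrongConcaveOn Set.univ m f := by
  have hneg : StrongConvexOn Set.univ m (-f) := by
    refine strongConvexOn_univ_of_le_deriv2 hf.neg fun x => ?_
    simp only [deriv.fun_neg', Pi.neg_def]
    exact le_neg_of_le_neg (hm x)
  exact neg_neg f ▸ hneg.neg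

variable {E : Type*} [NormedAddCommGroup E] [InnerProductSpace ℝ E]

lemma inner_le_mul_sq_norm_add_sq_norm_div {m : ℝ} (hm : 0 < m) (x y : E) :
    ⟪x, y⟫ ≤ m / 2 * ‖x‖ ^ 2 + ‖y‖ ^ 2 / (2 * m) := by
  have hsq : m / 2 * ‖x‖ ^ 2 + ‖y‖ ^ 2 / (2 * m) - ‖x‖ * ‖y‖ = (m * ‖x‖ - ‖y‖) ^ 2 / (2 * m) := by
    field
  have : 0 ≤ (m * ‖x‖ - ‖y‖) ^ 2 / (2 * m) := by positivity
  linarith [real_inner_le_norm x y]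

variable [FiniteDimensional ℝ E] {f : E → ℝ} {m : ℝ}

lemma exists_affine_add_sq_norm_le (hf : StrongConvexOn Set.univ m f) :
    ∃ (w : E) (c : ℝ), ∀ x, c + ⟪w, x⟫ + m / 2 * ‖x‖ ^ 2 ≤ f x := by
  have hconv := strongConvexOn_iff_convex.1 hf
  obtain ⟨l, c, hle, -⟩ := hconv.exists_affine_le_of_lt (𝕜 := ℝ) (Set.mem_univ 0) (sub_one_lt _)
    isClosed_univ (hconv.continuousOn isOpen_univ).lowerSemicontinuousOn
  refine ⟨(InnerProductSpace.toDual ℝ E).symm l, c, fun x => ?_⟩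
  have := hle ⟨x, Set.mem_univ x⟩
  simp only [Pi.add_apply, Set.domRestrict_apply, Function.comp_apply, RCLike.re_to_real,
    Function.const_apply] at this
  rw [InnerProductSpace.toDual_symm_apply]
  linarith

lemma bddAbove_range_inner_sub (hm : 0 < m) (hf : StrongConvexOn Set.univ m f) (x : E) :
    BddAbove (Set.range fun σ => ⟪σ, x⟫ - f σ) := by
  obtain ⟨w, c, hle⟩ := exists_affine_add_sq_norm_le hf
  refine ⟨‖x - w‖ ^ 2 / (2 * m) - c, ?_⟩
  rintro _ ⟨σ, rfl⟩
  have := inner_le_mul_sq_norm_add_sq_norm_div hm σ (x - w)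
  rw [inner_sub_right, real_inner_comm w] at this
  linarith [hle σ]

lemma integrable_exp_neg_add_inner [MeasurableSpace E] [BorelSpace E] (hm : 0 < m)
    (hf : StrongConvexOn Set.univ m f) (σ : E) :
    Integrable fun x => exp (-f x + ⟪σ, x⟫) := by
  obtain ⟨w, c, hle⟩ := exists_affine_add_sq_norm_le hf
  have hconv : ConvexOn ℝ Set.univ f := (hf.strictConvexOn hm).convexOn
  have hcont : Continuous f := continuousOn_univ.1 (hconv.continuousOn isOpen_univ)
  have hgauss := (GaussianFourier.integrable_cexp_neg_mul_sq_norm_add (V := E)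
    (b := (m / 2 : ℝ)) (by simpa using half_pos hm) 1 (σ - w)).norm.const_mul (exp (-c))
  refine hgauss.mono' (by fun_prop) (ae_of_all _ fun x => ?_)
  rw [norm_of_nonneg (exp_pos _).le, Complex.norm_exp, ← exp_add, exp_le_exp]
  norm_cast
  rw [inner_sub_left]
  linarith [hle x]

end StrongConvexity

/-! ### Legendre transforms -/

section LegendreTransform

variable {E : Type*} [NormedAddCommGroup E] [InnerProductSpace ℝ E] {f : E → ℝ} {m : ℝ}

/-- The Legendre transform `f*`, where the supremum of an unbounded family is the junk value `0`. -/
def legendreTransform (f : E → ℝ) (x : E) : ℝ :=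
  ⨆ σ : E, (⟪σ, x⟫ - f σ)

lemma inner_sub_le_legendreTransform {x : E} (hbdd : BddAbove (Set.range fun σ => ⟪σ, x⟫ - f σ))
    (σ : E) : ⟪σ, x⟫ - f σ ≤ legendreTransform f x :=
  le_ciSup hbdd σ

lemma convexOn_legendreTransform (hbdd : ∀ x, BddAbove (Set.range fun σ => ⟪σ, x⟫ - f σ)) :
    ConvexOn ℝ Set.univ (legendreTransform f) := by
  refine ⟨convex_univ, fun x _ y _ a b ha hb hab => ciSup_le fun σ => ?_⟩
  calc ⟪σ, a • x + b • y⟫ - f σ = a • (⟪σ, x⟫ - f σ) + b • (⟪σ, y⟫ - f σ) := by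
        simp only [inner_add_right, real_inner_smul_right, smul_eq_mul]
        linear_combination f σ * hab
    _ ≤ a • legendreTransform f x + b • legendreTransform f y := by
        gcongr
        · exact inner_sub_le_legendreTransform (hbdd x) σ
        · exact inner_sub_le_legendreTransform (hbdd y) σ

/-- The cross term `a * b * ⟪σ - τ, x - y⟫` of two competitors `σ` and `τ` is absorbed by the strong
convexity of `f` through Young's inequality. -/
lemma strongConcaveOn_legendreTransform (hm : 0 < m) (hf : StrongConvexOn Set.univ m f)
    (hbdd : ∀ x, BddAbove (Set.range fun σ => ⟪σ, x⟫ - f σ)) :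
    StrongConcaveOn Set.univ (-m⁻¹) (legendreTransform f) := by
  refine ⟨convex_univ, fun x _ y _ a b ha hb hab => ?_⟩
  have hdual (σ τ : E) : a * (⟪σ, x⟫ - f σ) + b * (⟪τ, y⟫ - f τ) ≤
      legendreTransform f (a • x + b • y) + a * b * (‖x - y‖ ^ 2 / (2 * m)) := by
    have hstrong := hf.2 (Set.mem_univ σ) (Set.mem_univ τ) ha hb hab
    have hsup := inner_sub_le_legendreTransform (hbdd (a • x + b • y)) (a • σ + b • τ)
    have hyoung := mul_le_mul_of_nonneg_left
      (inner_le_mul_sq_norm_add_sq_norm_div hm (σ - τ) (x - y)) (mul_nonneg ha hb)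
    obtain rfl : b = 1 - a := by linarith
    simp only [inner_add_left, inner_add_right, inner_sub_left, inner_sub_right,
      real_inner_smul_left, real_inner_smul_right, smul_eq_mul] at hstrong hsup hyoung
    linarith
  suffices a * legendreTransform f x + b * legendreTransform f y ≤
      legendreTransform f (a • x + b • y) + a * b * (‖x - y‖ ^ 2 / (2 * m)) by
    simp only [smul_eq_mul]
    have hm' : a * b * (-m⁻¹ / 2 * ‖x - y‖ ^ 2) = -(a * b * (‖x - y‖ ^ 2 / (2 * m))) := by ring
    linarith
  rw [← le_sub_iff_add_le]
  nth_rw 1 [legendreTransform]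
  rw [Real.mul_iSup_of_nonneg ha]
  refine ciSup_le fun σ => ?_
  rw [le_sub_comm]
  nth_rw 1 [legendreTransform]
  rw [Real.mul_iSup_of_nonneg hb]
  exact ciSup_le fun τ => le_sub_iff_add_le'.2 (hdual σ τ)

end LegendreTransform

/-! ### Log-partition functions -/

section LogPartition

variable {E : Type*} [NormedAddCommGroup E] [InnerProductSpace ℝ E] [FiniteDimensional ℝ E]
  [MeasurableSpace E] [BorelSpace E] {ψ : E → ℝ} {κ : ℝ}

/-- The logarithm of the partition function of a bond with potential `ψ` under the tension `σ`, at
inverse temperature `1`. -/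
def logPartition (ψ : E → ℝ) (σ : E) : ℝ :=
  log (∫ y, exp (-ψ y + ⟪σ, y⟫))

/-- Shifting the variable of integration by `κ⁻¹ • σ` completes the square, which leaves the
log-integral of the exponential of a function convex in `σ`. -/
lemma strongConvexOn_logPartition (hκ : 0 < κ) (hψ : StrongConcaveOn Set.univ (-κ) ψ)
    (hint : ∀ σ, Integrable fun y => exp (-ψ y + ⟪σ, y⟫)) :
    StrongConvexOn Set.univ κ⁻¹ (logPartition ψ) := by
  set F : E → E → ℝ := fun σ z =>
    κ / 2 * ‖z + κ⁻¹ • σ‖ ^ 2 - ψ (z + κ⁻¹ • σ) - κ / 2 * ‖z‖ ^ 2 with hF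
  have hsquare (σ z : E) :
      -ψ (z + κ⁻¹ • σ) + ⟪σ, z + κ⁻¹ • σ⟫ = κ⁻¹ / 2 * ‖σ‖ ^ 2 + F σ z := by
    simp only [hF]
    rw [norm_add_sq_real, norm_smul, mul_pow, norm_eq_abs, sq_abs, inner_add_right,
      real_inner_smul_right, real_inner_smul_right, real_inner_self_eq_norm_sq,
      real_inner_comm z σ]
    field_simp
    ring
  have hFconv (z : E) : ConvexOn ℝ Set.univ fun σ => F σ z := by
    have hφ : ConvexOn ℝ Set.univ fun y => κ / 2 * ‖y‖ ^ 2 - ψ y := by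
      refine (strongConcaveOn_iff_convex.1 hψ).neg.congr fun y _ => ?_
      simp only [Pi.neg_apply]
      ring
    have hshift : ConvexOn ℝ Set.univ fun σ => κ / 2 * ‖z + κ⁻¹ • σ‖ ^ 2 - ψ (z + κ⁻¹ • σ) :=
      (hφ.translate_right z).comp_linearMap (κ⁻¹ • (LinearMap.id : E →ₗ[ℝ] E))
    exact hshift.sub (concaveOn_const _ convex_univ)
  have hFint (σ : E) : Integrable fun z => exp (F σ z) := by
    have := ((hint σ).comp_add_right (κ⁻¹ • σ)).const_mul (exp (-(κ⁻¹ / 2 * ‖σ‖ ^ 2)))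
    simpa only [hsquare, ← exp_add, neg_add_cancel_left] using this
  rw [strongConvexOn_iff_convex]
  convert convexOn_log_integral_exp hFconv fun σ _ => hFint σ using 2 with σ
  rw [logPartition, ← integral_add_right_eq_self _ (κ⁻¹ • σ)]
  simp only [hsquare, exp_add]
  rw [integral_const_mul, log_mul (exp_ne_zero _) (integral_exp_pos (hFint σ)).ne', log_exp,
    add_sub_cancel_left]

end LogPartition

/-! ### Convex functions of one real variable -/

section OneVariable

lemma exists_forall_add_mul_le_of_convexOn {w : ℝ → ℝ} (hw : ConvexOn ℝ Set.univ w) (a : ℝ) :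
    ∃ s, ∀ h, w a + s * h ≤ w (a + h) := by
  have ha : a ∈ interior (Set.univ : Set ℝ) := by simp
  refine ⟨derivWithin w (Set.Ioi a) a, fun h => ?_⟩
  rcases lt_trichotomy h 0 with hh | rfl | hh
  · have := (hw.slope_le_leftDeriv_of_mem_interior (Set.mem_univ (a + h)) ha (by linarith)).trans
      (hw.leftDeriv_le_rightDeriv_of_mem_interior ha)
    rw [slope_def_field, div_le_iff₀ (by linarith)] at this
    linarith
  · simp
  · have := hw.rightDeriv_le_slope_of_mem_interior ha (Set.mem_univ (a + h)) (by linarith)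
    rw [slope_def_field, le_div_iff₀ (by linarith)] at this
    linarith

lemma hasDerivAt_of_le_of_le_add_sq {w : ℝ → ℝ} {a s k : ℝ} (hle : ∀ h, w a + s * h ≤ w (a + h))
    (hge : ∀ h, w (a + h) ≤ w a + s * h + k * h ^ 2) : HasDerivAt w s a := by
  rw [hasDerivAt_iff_isLittleO_nhds_zero]
  have hO : (fun h => w (a + h) - w a - h • s) =O[nhds 0] fun h : ℝ => h ^ 2 := by
    refine Asymptotics.IsBigO.of_bound k (Eventually.of_forall fun h => ?_)
    rw [smul_eq_mul, norm_of_nonneg (by linarith [hle h]), norm_of_nonneg (sq_nonneg h)]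
    linarith [hge h]
  exact hO.trans_isLittleO (by simpa using Asymptotics.isLittleO_pow_id (𝕜 := ℝ) one_lt_two)

/-- The upper bound at `a + t` combines concavity of `w - k / 2 * x ^ 2` at the midpoint `a` of
`a + t` and `a - t` with the lower bound at `a - t`. -/
lemma sub_sub_deriv_mul_mem_Icc {w : ℝ → ℝ} {k : ℝ} (hconv : ConvexOn ℝ Set.univ w)
    (hconc : StrongConcaveOn Set.univ (-k) w) (a h : ℝ) :
    w (a + h) - w a - deriv w a * h ∈ Set.Icc 0 (k * h ^ 2) := by
  obtain ⟨s, hs⟩ := exists_forall_add_mul_le_of_convexOn hconv a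
  have hge (t : ℝ) : w (a + t) ≤ w a + s * t + k * t ^ 2 := by
    have hmid := hconc.2 (Set.mem_univ (a + t)) (Set.mem_univ (a + -t)) one_half_pos.le
      one_half_pos.le (add_halves 1)
    have hcenter : (1 / 2 : ℝ) • (a + t) + (1 / 2 : ℝ) • (a + -t) = a := by
      simp only [smul_eq_mul]
      ring
    rw [hcenter] at hmid
    simp only [norm_eq_abs, sq_abs, smul_eq_mul] at hmid
    linarith [hs (-t)]
  rw [(hasDerivAt_of_le_of_le_add_sq hs hge).deriv]
  constructor <;> linarith [hs h, hge h]

end OneVariable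

/-! ### The minimal energy of a chain -/

section Chain

variable {w : ℝ → ℝ} {N : ℕ}

/-- The minimiser is the chain with equal increments. -/
lemma EcgN_eq (hw : ConvexOn ℝ Set.univ w) (hN : 2 ≤ N) (A y : ℝ) :
    EcgN w N A y = (N - 1) * (w (A + (A - y) / (N - 1)) - w A) := by
  have hM : 0 < (N : ℝ) - 1 := sub_pos.2 (by exact_mod_cast hN)
  have hcard : ((Finset.Icc 2 N).card : ℝ) = N - 1 := by
    rw [Nat.card_Icc, Nat.add_sub_add_right N 1 1, Nat.cast_pred (by lia)]
  set d := A + (A - y) / ((N : ℝ) - 1) with hd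
  have hd' : N * A - y = (N - 1) * d := by
    rw [hd, mul_add, mul_div_cancel₀ _ hM.ne']
    ring
  refine IsLeast.csInf_eq ⟨⟨fun i => y + (i - 1) * d, by simp, by simp [← hd'], ?_⟩, ?_⟩
  · rw [← hcard, ← nsmul_eq_mul, ← Finset.sum_const]
    refine Finset.sum_congr rfl fun i hi => ?_
    have hi₀ : 0 < i := by linarith [(Finset.mem_Icc.1 hi).1]
    simp only [Nat.cast_pred hi₀]
    congr 2
    ring
  · rintro _ ⟨u, hu₁, huN, rfl⟩
    have htelescope : ∑ i ∈ Finset.Icc 2 N, (u i - u (i - 1)) = N * A - y := by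
      simpa [hu₁, huN] using Finset.sum_Icc_sub hN fun i => u (i - 1)
    have jensen := hw.map_sum_le (t := Finset.Icc 2 N) (w := fun _ => ((N : ℝ) - 1)⁻¹)
      (p := fun i => u i - u (i - 1)) (fun _ _ => (inv_pos.2 hM).le)
      (by rw [Finset.sum_const, nsmul_eq_mul, hcard, mul_inv_cancel₀ hM.ne']) (by simp)
    rw [← Finset.smul_sum, ← Finset.smul_sum, htelescope, hd', smul_eq_mul, smul_eq_mul,
      inv_mul_cancel_left₀ hM.ne', le_inv_mul_iff₀ hM] at jensen
    rw [Finset.sum_sub_distrib, Finset.sum_const, nsmul_eq_mul, hcard, mul_sub]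
    exact sub_le_sub_right jensen _

lemma continuous_EcgN (hw : ConvexOn ℝ Set.univ w) (hN : 2 ≤ N) (A : ℝ) :
    Continuous (EcgN w N A) := by
  have hcont : Continuous w := continuousOn_univ.1 (hw.continuousOn isOpen_univ)
  rw [funext (EcgN_eq hw hN A)]
  fun_prop

lemma EcgN_sub_deriv_mul_mem_Icc {k : ℝ} (hconv : ConvexOn ℝ Set.univ w)
    (hconc : StrongConcaveOn Set.univ (-k) w) (hN : 2 ≤ N) (A y : ℝ) :
    EcgN w N A y - deriv w A * (A - y) ∈ Set.Icc 0 (k / (N - 1) * (A - y) ^ 2) := by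
  have hM : 0 < (N : ℝ) - 1 := sub_pos.2 (by exact_mod_cast hN)
  set h := (A - y) / ((N : ℝ) - 1) with hh
  have hexcess : EcgN w N A y - deriv w A * (A - y) =
      (N - 1) * (w (A + h) - w A - deriv w A * h) := by
    rw [EcgN_eq hconv hN, hh]
    field_simp
  have hquad : k / (N - 1) * (A - y) ^ 2 = (N - 1) * (k * h ^ 2) := by
    rw [hh]
    field_simp
  obtain ⟨hlo, hhi⟩ := sub_sub_deriv_mul_mem_Icc hconv hconc A h
  rw [hexcess, hquad]
  exact ⟨mul_nonneg hM.le hlo, mul_le_mul_of_nonneg_left hhi hM.le⟩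

end Chain

/-! ### Defects in a chain -/

section ChainDefect

lemma integrable_sq_sub_tilted {α : Type*} [MeasurableSpace α] {μ : Measure α} {f X : α → ℝ}
    (hint : ∀ t, Integrable (fun a => exp (f a + t * X a)) μ) (c : ℝ) :
    Integrable (fun a => (c - X a) ^ 2) (μ.tilted f) := by
  have hf : Integrable (fun a => exp (f a)) μ := by simpa using hint 0
  have hset : integrableExpSet X (μ.tilted f) = Set.univ := by
    refine Set.eq_univ_of_forall fun t => ?_
    rw [integrableExpSet, Set.mem_ofPred, integrable_tilted_iff hf]
    simpa only [smul_eq_mul, ← exp_add] using hint t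
  have hmem : MemLp X 2 (μ.tilted f) :=
    memLp_of_mem_interior_integrableExpSet (by simp [hset]) 2
  exact ((memLp_const c).sub hmem).integrable_sq

lemma integrable_exp_sub_mul_sub_add_mul {V : ℝ → ℝ}
    (hV : ∀ σ, Integrable fun y => exp (V y + σ * y)) (s A t : ℝ) :
    Integrable fun y => exp (V y - s * (A - y) + t * y) := by
  refine ((hV (s + t)).const_mul (exp (-(s * A)))).congr (ae_of_all _ fun y => ?_)
  simp only [← exp_add]
  ring_nf

variable {w : ℝ → ℝ} {k : ℝ} {N : ℕ} {V : ℝ → ℝ}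

lemma integrable_EcgN_sub_tilted_and_integral_le (hconv : ConvexOn ℝ Set.univ w)
    (hconc : StrongConcaveOn Set.univ (-k) w) (hN : 2 ≤ N) (A : ℝ)
    (hV : ∀ σ, Integrable fun y => exp (V y + σ * y)) :
    Integrable (fun y => EcgN w N A y - deriv w A * (A - y))
        (volume.tilted fun y => V y - deriv w A * (A - y)) ∧
      ∫ y, (EcgN w N A y - deriv w A * (A - y)) ∂volume.tilted
        (fun y => V y - deriv w A * (A - y)) ≤
      k / (N - 1) * ∫ y, (A - y) ^ 2 ∂volume.tilted fun y => V y - deriv w A * (A - y) := by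
  have hbounds := EcgN_sub_deriv_mul_mem_Icc hconv hconc hN A
  have hsq := (integrable_sq_sub_tilted (integrable_exp_sub_mul_sub_add_mul hV (deriv w A) A)
    A).const_mul (k / (N - 1))
  have hD := hsq.mono' (f := fun y => EcgN w N A y - deriv w A * (A - y))
    (((continuous_EcgN hconv hN A).sub (by fun_prop)).aestronglyMeasurable)
    (ae_of_all _ fun y => by
      rw [norm_of_nonneg (hbounds y).1]
      exact (hbounds y).2)
  refine ⟨hD, ?_⟩
  rw [← integral_const_mul]
  exact integral_mono hD hsq fun y => (hbounds y).2

lemma integrable_exp_sub_EcgN (hconv : ConvexOn ℝ Set.univ w)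
    (hconc : StrongConcaveOn Set.univ (-k) w) (hN : 2 ≤ N) (A : ℝ)
    (hV : ∀ σ, Integrable fun y => exp (V y + σ * y)) :
    Integrable fun y => exp (V y - EcgN w N A y) := by
  have hlin : Integrable fun y => exp (V y - deriv w A * (A - y)) := by
    simpa using integrable_exp_sub_mul_sub_add_mul hV (deriv w A) A 0
  have hD : Continuous fun y => EcgN w N A y - deriv w A * (A - y) :=
    (continuous_EcgN hconv hN A).sub (by fun_prop)
  simpa only [sub_sub_sub_cancel_right] using integrable_exp_sub hlin hD.aestronglyMeasurable
    fun y => (EcgN_sub_deriv_mul_mem_Icc hconv hconc hN A y).1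

lemma exists_abs_defectFreeEnergy_EcgN_sub_le {ψ P : ℝ → ℝ} (hconv : ConvexOn ℝ Set.univ w)
    (hconc : StrongConcaveOn Set.univ (-k) w) (hk : 0 ≤ k)
    (hψ : ∀ σ, Integrable fun y => exp (-ψ y + σ * y))
    (hP : ∀ σ, Integrable fun y => exp (-P y - ψ y + σ * y)) (A : ℝ) :
    ∃ C > 0, ∀ N : ℕ, 2 ≤ N →
      |defectFreeEnergy volume ψ P (EcgN w N A) -
        defectFreeEnergy volume ψ P (fun y => deriv w A * (A - y))| ≤ C / N := by
  set mP := ∫ y, (A - y) ^ 2 ∂volume.tilted fun y => -P y - ψ y - deriv w A * (A - y)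
  set mψ := ∫ y, (A - y) ^ 2 ∂volume.tilted fun y => -ψ y - deriv w A * (A - y)
  have hm : 0 ≤ mP + mψ := add_nonneg (integral_nonneg fun y => sq_nonneg _)
    (integral_nonneg fun y => sq_nonneg _)
  have hC : 0 ≤ 2 * k * (mP + mψ) := mul_nonneg (by positivity) hm
  refine ⟨2 * k * (mP + mψ) + 1, add_pos_of_nonneg_of_pos hC one_pos, fun N hN => ?_⟩
  obtain ⟨hintP, hleP⟩ := integrable_EcgN_sub_tilted_and_integral_le hconv hconc hN A hP
  obtain ⟨hintψ, hleψ⟩ := integrable_EcgN_sub_tilted_and_integral_le hconv hconc hN A hψ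
  have hN₂ : (2 : ℝ) ≤ N := by exact_mod_cast hN
  have hrate : k / (N - 1) ≤ 2 * k / N := by
    rw [div_le_div_iff₀ (by linarith) (by linarith)]
    nlinarith
  calc _ ≤ _ := abs_defectFreeEnergy_sub_le
        (fun y => sub_nonneg.1 (EcgN_sub_deriv_mul_mem_Icc hconv hconc hN A y).1)
        (by simpa using integrable_exp_sub_mul_sub_add_mul hP (deriv w A) A 0)
        (by simpa using integrable_exp_sub_mul_sub_add_mul hψ (deriv w A) A 0) hintP hintψ
    _ ≤ k / (N - 1) * (mP + mψ) := by linarith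
    _ ≤ 2 * k / N * (mP + mψ) := mul_le_mul_of_nonneg_right hrate hm
    _ = 2 * k * (mP + mψ) / N := by ring
    _ ≤ (2 * k * (mP + mψ) + 1) / N := by
        gcongr
        exact le_add_of_nonneg_right zero_le_one

end ChainDefect

/-! ### The Cauchy–Born strain energy -/

section StrainEnergy

variable {ψ : ℝ → ℝ} {κ : ℝ}

lemma W_eq_legendreTransform (ψ : ℝ → ℝ) : W ψ = legendreTransform (logPartition ψ) := by
  ext A
  simp [W, legendreTransform, logPartition, mul_comm]

lemma convexOn_W (hκ : 0 < κ) (hψ : StrongConcaveOn Set.univ (-κ) ψ)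
    (hint : ∀ σ, Integrable fun y => exp (-ψ y + σ * y)) : ConvexOn ℝ Set.univ (W ψ) := by
  have hΛ := strongConvexOn_logPartition hκ hψ (by simpa [mul_comm] using hint)
  rw [W_eq_legendreTransform]
  exact convexOn_legendreTransform (bddAbove_range_inner_sub (inv_pos.2 hκ) hΛ)

lemma strongConcaveOn_W (hκ : 0 < κ) (hψ : StrongConcaveOn Set.univ (-κ) ψ)
    (hint : ∀ σ, Integrable fun y => exp (-ψ y + σ * y)) :
    StrongConcaveOn Set.univ (-κ) (W ψ) := by
  have hΛ := strongConvexOn_logPartition hκ hψ (by simpa [mul_comm] using hint)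
  rw [W_eq_legendreTransform, ← inv_inv κ]
  exact strongConcaveOn_legendreTransform (inv_pos.2 hκ) hΛ
    (bddAbove_range_inner_sub (inv_pos.2 hκ) hΛ)

end StrainEnergy

theorem coarse_grained_free_energy_well_defined_and_rate_general
    (ψ P : ℝ → ℝ) {κ : ℝ} (hκ : 0 < κ) (hψ : StrongConcaveOn Set.univ (-κ) ψ)
    (hintψ : ∀ σ, Integrable fun y => exp (-ψ y + σ * y))
    (hintψP : ∀ σ, Integrable fun y => exp (-(ψ y + P y) + σ * y)) (A : ℝ) :
    (∀ N : ℕ, 2 ≤ N →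
      Integrable (fun y : ℝ => Real.exp (-P y - ψ y - EcgN (W ψ) N A y)) ∧
      0 < ∫ y : ℝ, Real.exp (-P y - ψ y - EcgN (W ψ) N A y) ∧
      Integrable (fun y : ℝ => Real.exp (-ψ y - EcgN (W ψ) N A y)) ∧
      0 < ∫ y : ℝ, Real.exp (-ψ y - EcgN (W ψ) N A y)) ∧
    ∃ C > 0, ∀ N : ℕ, 2 ≤ N →
      |GNcg ψ P N A -
        (- Real.log
          ((∫ y : ℝ, Real.exp (-(ψ y + P y) + deriv (W ψ) A * y)) /
           (∫ y : ℝ, Real.exp (-ψ y + deriv (W ψ) A * y))))| ≤ C / N := by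
  have hconv := convexOn_W hκ hψ hintψ
  have hconc := strongConcaveOn_W hκ hψ hintψ
  have hneg (y : ℝ) : -(ψ y + P y) = -P y - ψ y := by ring
  simp only [hneg] at hintψP ⊢
  refine ⟨fun N hN => ?_, ?_⟩
  · have hnum := integrable_exp_sub_EcgN hconv hconc hN A hintψP
    have hden := integrable_exp_sub_EcgN hconv hconc hN A hintψ
    exact ⟨hnum, integral_exp_pos hnum, hden, integral_exp_pos hden⟩
  · have hlimit := defectFreeEnergy_const_add (μ := volume) (ψ := ψ) (P := P)
      (deriv (W ψ) A * A) fun y => -(deriv (W ψ) A * y)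
    simp only [← sub_eq_add_neg, ← mul_sub] at hlimit
    have := exists_abs_defectFreeEnergy_EcgN_sub_le hconv hconc hκ.le hintψ hintψP A
    rw [hlimit] at this
    simpa only [GNcg, defectFreeEnergy, sub_neg_eq_add] using this

/-- `G_N^cg(A)` is well-defined and approximates `G_∞(A)` at rate `1/N`. -/
theorem coarse_grained_free_energy_well_defined_and_rate
    (ψ P : ℝ → ℝ) (κ₁ κ₂ ς₁ ς₂ : ℝ)
    (hψ : ContDiff ℝ 2 ψ) (hP : ContDiff ℝ 2 P)
    (hκ₁ : 0 < κ₁) (hκ : κ₁ ≤ κ₂) (hς₁ : 0 < ς₁) (hς : ς₁ ≤ ς₂)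
    (hψ'' : ∀ y : ℝ, κ₁ ≤ deriv (deriv ψ) y ∧ deriv (deriv ψ) y ≤ κ₂)
    (hψP'' : ∀ y : ℝ, ς₁ ≤ deriv (deriv (fun z => ψ z + P z)) y ∧
        deriv (deriv (fun z => ψ z + P z)) y ≤ ς₂)
    (A : ℝ) :
    (∀ N : ℕ, 2 ≤ N →
      Integrable (fun y : ℝ => Real.exp (-P y - ψ y - EcgN (W ψ) N A y)) ∧
      0 < ∫ y : ℝ, Real.exp (-P y - ψ y - EcgN (W ψ) N A y) ∧
      Integrable (fun y : ℝ => Real.exp (-ψ y - EcgN (W ψ) N A y)) ∧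
      0 < ∫ y : ℝ, Real.exp (-ψ y - EcgN (W ψ) N A y)) ∧
    ∃ C > 0, ∀ N : ℕ, 2 ≤ N →
      |GNcg ψ P N A -
        (- Real.log
          ((∫ y : ℝ, Real.exp (-(ψ y + P y) + deriv (W ψ) A * y)) /
           (∫ y : ℝ, Real.exp (-ψ y + deriv (W ψ) A * y))))| ≤ C / N := by
  refine coarse_grained_free_energy_well_defined_and_rate_general ψ P (hκ₁.trans_le hκ)
    (strongConcaveOn_univ_of_deriv2_le hψ fun y => ?_) (fun σ => ?_) (fun σ => ?_) A
  · simpa using (hψ'' y).2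
  · simpa [mul_comm] using integrable_exp_neg_add_inner hκ₁
      (strongConvexOn_univ_of_le_deriv2 hψ fun y => (hψ'' y).1) σ
  · simpa [mul_comm] using integrable_exp_neg_add_inner hς₁
      (strongConvexOn_univ_of_le_deriv2 (hψ.add hP) fun y => (hψP'' y).1) σ
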